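/- For a holomorphic foliation F on a complex surface with an invariant curve C = {f = 0} (f holomorphic, reduced), given a defining 1-form ω of F, there exist holomorphic functions g, k and a holomorphic 1-form η near a point p ∈ C such that gω = k df + f η with k not identically zero on C and k nonvanishing on C ∖ {p}. -/

import Mathlib

namespace Suwa
open Metric Set Filter Topology

lemma curry_analytic {ρ r : ℝ} (hρ : 0 < ρ) (G : ℂ → ℂ → ℂ)
    (hc : ContinuousOn (fun q : ℂ × ℂ => G q.1 q.2) (closedBall 0 ρ ×ˢ sphere 0 r))
    (hd : ∀ w ∈ sphere (0 : ℂ) r, DifferentiableOn ℂ (fun x => G x w) (closedBall 0 ρ)) :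
    ∃ Φ : ℂ → C(sphere (0 : ℂ) r, ℂ), AnalyticAt ℂ Φ 0 ∧
      ∀ x ∈ ball (0 : ℂ) ρ, ∀ w, Φ x w = G x w := by
  classical
  let g : C(closedBall (0 : ℂ) ρ × sphere (0 : ℂ) r, ℂ) :=
    ⟨fun q => G q.1 q.2, by
      refine hc.comp_continuous (f := fun q : closedBall (0 : ℂ) ρ × sphere (0 : ℂ) r =>
        ((q.1 : ℂ), (q.2 : ℂ))) (by fun_prop) ?_
      intro q
      exact ⟨q.1.2, q.2.2⟩⟩
  let Φ₀ : ℂ → C(sphere (0 : ℂ) r, ℂ) := fun x =>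
    if h : x ∈ closedBall (0 : ℂ) ρ then g.curry ⟨x, h⟩ else 0
  have hΦ₀ : ∀ x ∈ closedBall (0 : ℂ) ρ, ∀ w, Φ₀ x w = G x w := by
    intro x hx w
    simp only [Φ₀, hx, dif_pos]
    rfl
  have hcont : ContinuousOn Φ₀ (closedBall 0 ρ) := by
    rw [continuousOn_iff_continuous_domRestrict]
    have : (closedBall (0 : ℂ) ρ).domRestrict Φ₀ = g.curry := by
      ext1 x
      simp only [Φ₀, Set.domRestrict_apply, x.2, dif_pos]
    rw [this]
    exact g.curry.continuous
  have hci : CircleIntegrable Φ₀ 0 ρ :=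
    (hcont.mono sphere_subset_closedBall).circleIntegrable hρ.le
  lift ρ to NNReal using hρ.le
  have hps := (hasFPowerSeriesOn_cauchy_integral hci (by exact_mod_cast hρ))
  refine ⟨_, hps.analyticAt, ?_⟩
  intro x hx w
  have hdc : DiffContOnCl ℂ (fun x => G x w) (ball 0 ρ) :=
    ((hd w w.2).mono (by exact closure_ball_subset_closedBall)).diffContOnCl
  have key := hdc.two_pi_i_inv_smul_circleIntegral_sub_inv_smul hx
  rw [← key]
  have hxne : ∀ z ∈ sphere (0 : ℂ) ρ, z - x ≠ 0 := by
    intro z hz h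
    rw [sub_eq_zero.1 h, mem_sphere] at hz
    rw [mem_ball] at hx
    exact hx.ne hz
  have hci2 : CircleIntegrable (fun z => (z - x)⁻¹ • Φ₀ z) 0 ρ := by
    apply ContinuousOn.circleIntegrable hρ.le
    refine ContinuousOn.fun_smul ?_ (hcont.mono sphere_subset_closedBall)
    exact ContinuousOn.inv₀ (by fun_prop) hxne
  have e1 : (∮ z in C(0, ρ), (z - x)⁻¹ • Φ₀ z) w = ∮ z in C(0, ρ), (z - x)⁻¹ • G z w := by
    have h1 := ContinuousLinearMap.intervalIntegral_comp_comm
      (ContinuousMap.evalCLM (α := sphere (0 : ℂ) r) (M := ℂ) ℂ w) hci2.out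
    simp only [circleIntegral]
    refine Eq.trans h1.symm ?_
    apply intervalIntegral.integral_congr
    intro θ _
    simp only [ContinuousMap.evalCLM_apply, ContinuousMap.smul_apply]
    rw [hΦ₀ _ (sphere_subset_closedBall (circleMap_mem_sphere _ hρ.le _))]
  rw [ContinuousMap.smul_apply, e1]

lemma circle_clm {r : ℝ} (hr : 0 < r) : ∃ J : C(sphere (0 : ℂ) r, ℂ) →L[ℂ] ℂ,
    ∀ (φ : C(sphere (0 : ℂ) r, ℂ)) (ψ : ℂ → ℂ), (∀ w, φ w = ψ w) →
      J φ = ∮ w in C(0, r), ψ w := by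
  let cm : ℝ → sphere (0 : ℂ) r := fun θ => ⟨circleMap 0 r θ, circleMap_mem_sphere _ hr.le _⟩
  have hcm : Continuous cm := by
    apply Continuous.subtype_mk
    exact continuous_circleMap 0 r
  have hint : ∀ φ : C(sphere (0 : ℂ) r, ℂ), Continuous fun θ => deriv (circleMap 0 r) θ * φ (cm θ) := by
    intro φ
    have := φ.continuous.comp hcm
    have h2 : Continuous (deriv (circleMap 0 r)) := by
      rw [show deriv (circleMap 0 r) = fun θ => circleMap 0 r θ * Complex.I from by
        ext; simp [deriv_circleMap]]
      exact (continuous_circleMap 0 r).mul continuous_const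
    exact h2.mul this
  let J₀ : C(sphere (0 : ℂ) r, ℂ) →ₗ[ℂ] ℂ :=
    { toFun := fun φ => ∫ θ in (0:ℝ)..(2 * Real.pi), deriv (circleMap 0 r) θ * φ (cm θ)
      map_add' := by
        intro φ ψ
        rw [← intervalIntegral.integral_add ((hint φ).intervalIntegrable _ _)
          ((hint ψ).intervalIntegrable _ _)]
        simp [mul_add]
      map_smul' := by
        intro c φ
        simp only [RingHom.id_apply, smul_eq_mul]
        rw [← intervalIntegral.integral_const_mul]
        congr 1
        ext θ
        simp
        ring }
  refine ⟨J₀.mkContinuous (r * |2 * Real.pi - 0|) ?_, ?_⟩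
  · intro φ
    have : ‖J₀ φ‖ ≤ (r * ‖φ‖) * |2 * Real.pi - 0| := by
      apply intervalIntegral.norm_integral_le_of_norm_le_const
      intro θ _
      rw [norm_mul]
      apply mul_le_mul _ (φ.norm_coe_le_norm _) (norm_nonneg _) hr.le
      simp [deriv_circleMap, abs_of_pos hr]
    linarith
  · intro φ ψ h
    simp only [LinearMap.mkContinuous_apply, circleIntegral, smul_eq_mul]
    apply intervalIntegral.integral_congr
    intro θ _
    simp [h, cm]

lemma cauchy_param_analytic {ρ r : ℝ} (hρ : 0 < ρ) (hr : 0 < r) (G : ℂ → ℂ → ℂ)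
    (hc : ContinuousOn (fun q : ℂ × ℂ => G q.1 q.2) (closedBall 0 ρ ×ˢ sphere 0 r))
    (hd : ∀ w ∈ sphere (0 : ℂ) r, DifferentiableOn ℂ (fun x => G x w) (closedBall 0 ρ)) :
    AnalyticAt ℂ (fun z : ℂ × ℂ => ∮ w in C(0, r), (w - z.2)⁻¹ * G z.1 w) 0 := by
  obtain ⟨Φ, hΦ, hΦe⟩ := curry_analytic hρ G hc hd
  have hne : ∀ y ∈ closedBall (0 : ℂ) (r / 2), ∀ w ∈ sphere (0 : ℂ) r, w - y ≠ 0 := by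
    intro y hy w hw h
    rw [sub_eq_zero.1 h] at hw
    simp at hy hw
    linarith
  obtain ⟨Ψ, hΨ, hΨe⟩ := curry_analytic (r := r) (half_pos hr) (fun y w => (w - y)⁻¹)
    (by
      apply ContinuousOn.inv₀ (by fun_prop)
      intro q hq
      exact hne _ hq.1 _ hq.2)
    (by
      intro w hw
      apply DifferentiableOn.inv (by fun_prop)
      intro y hy
      exact hne _ hy _ hw)
  obtain ⟨J, hJ⟩ := circle_clm hr
  have h1 : AnalyticAt ℂ (fun z : ℂ × ℂ => Φ z.1) 0 :=
    AnalyticAt.fun_comp (g := Φ) (f := fun z : ℂ × ℂ => z.1) hΦ analyticAt_fst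
  have h2 : AnalyticAt ℂ (fun z : ℂ × ℂ => Ψ z.2) 0 :=
    AnalyticAt.fun_comp (g := Ψ) (f := fun z : ℂ × ℂ => z.2) hΨ analyticAt_snd
  have h3 : AnalyticAt ℂ (fun z : ℂ × ℂ => J (Ψ z.2 * Φ z.1)) 0 :=
    (J.analyticAt _).fun_comp (h2.mul h1)
  refine h3.congr ?_
  have : ball (0 : ℂ) ρ ×ˢ ball (0 : ℂ) (r / 2) ∈ 𝓝 (0 : ℂ × ℂ) :=
    prod_mem_nhds (ball_mem_nhds _ hρ) (ball_mem_nhds _ (half_pos hr))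
  filter_upwards [this] with z hz
  apply hJ
  intro w
  rw [ContinuousMap.mul_apply, hΦe _ hz.1, hΨe _ hz.2]


lemma isBigO_of_smooth {f h : ℂ × ℂ → ℂ} {z : ℂ × ℂ} (hf : AnalyticAt ℂ f z)
    (hh : AnalyticAt ℂ h z) (hfz : f z = 0) (hdf : fderiv ℂ f z ≠ 0)
    (h0 : ∀ᶠ z' in 𝓝 z, f z' = 0 → h z' = 0) : h =O[𝓝 z] f := by
  have hsd := hf.hasStrictFDerivAt
  have hsurj : (fderiv ℂ f z).range = ⊤ := by
    rw [LinearMap.range_eq_top]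
    obtain ⟨v, hv⟩ : ∃ v, fderiv ℂ f z v ≠ 0 := by
      by_contra! hcon
      exact hdf (by ext1 <;> ext <;> simp [hcon])
    intro y
    refine ⟨(y / fderiv ℂ f z v) • v, ?_⟩
    simp [hv]
  set R := (fderiv ℂ f z).nonlinearRightInverseOfSurjective hsurj with hR
  have hRpos : (0 : ℝ) < R.nnnorm :=
    (fderiv ℂ f z).nonlinearRightInverseOfSurjective_nnnorm_pos hsurj
  have hc : (0 : NNReal) < R.nnnorm⁻¹ / 2 := by
    have : 0 < R.nnnorm := hRpos
    positivity
  obtain ⟨s, hs, hsa⟩ := hsd.approximates_deriv_on_nhds (c := R.nnnorm⁻¹ / 2) (Or.inr hc)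
  obtain ⟨K, t, ht, htl⟩ := hh.hasStrictFDerivAt.exists_lipschitzOnWith
  obtain ⟨ε, hε, hεs⟩ := Metric.mem_nhds_iff.1 (inter_mem (inter_mem hs ht) h0)
  set κ : ℝ := (R.nnnorm : ℝ)⁻¹ / 2 with hκ
  have hκpos : 0 < κ := by positivity
  have hsmall : ∀ᶠ z' in 𝓝 z, ‖f z'‖ / κ < ε / 2 := by
    have : Tendsto (fun z' => ‖f z'‖ / κ) (𝓝 z) (𝓝 (‖f z‖ / κ)) :=
      (hf.continuousAt.norm).div_const _
    rw [hfz] at this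
    simp only [norm_zero, zero_div] at this
    exact this.eventually_lt_const (half_pos hε)
  apply Asymptotics.IsBigO.of_bound (K / κ)
  filter_upwards [hsmall, Metric.ball_mem_nhds z (half_pos hε)] with z' h1 h2
  have hsub : closedBall z' (‖f z'‖ / κ) ⊆ ball z ε := by
    intro u hu
    rw [mem_closedBall] at hu
    rw [mem_ball] at h2 ⊢
    linarith [dist_triangle u z' z]
  have hso := hsa.surjOn_closedBall_of_nonlinearRightInverse R (ε := ‖f z'‖ / κ) (b := z')
    (by positivity) (hsub.trans (hεs.trans (fun _ h => h.1.1)))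
  have h0m : (0 : ℂ) ∈ closedBall (f z') (((R.nnnorm : ℝ)⁻¹ - ((R.nnnorm⁻¹ / 2 : NNReal) : ℝ)) * (‖f z'‖ / κ)) := by
    rw [mem_closedBall, dist_zero_left]
    have : ((R.nnnorm : ℝ)⁻¹ - ((R.nnnorm⁻¹ / 2 : NNReal) : ℝ)) = κ := by
      push_cast
      rw [hκ]; ring
    rw [this, mul_div_cancel₀ _ hκpos.ne']
  obtain ⟨u, hu, hfu⟩ := hso h0m
  have hub := hεs (hsub hu)
  have hz'b : z' ∈ ball z ε := ball_subset_ball (by linarith) h2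
  have hhu : h u = 0 := hub.2 hfu
  have := htl.dist_le_mul z' (hεs hz'b).1.2 u hub.1.2
  rw [hhu, dist_zero_right] at this
  rw [mem_closedBall, dist_comm] at hu
  calc ‖h z'‖ ≤ K * dist z' u := this
    _ ≤ K * (‖f z'‖ / κ) := by gcongr
    _ = K / κ * ‖f z'‖ := by ring

lemma prod_analytic {n : ℕ} {v : ℂ → Fin n → ℂ} {x₀ : ℂ}
    (h : ∀ j : ℕ, AnalyticAt ℂ (fun x => ∑ i, v x i ^ j) x₀) :
    AnalyticAt ℂ (fun x => ∏ i, v x i) x₀ := by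
  have key : ∀ m : ℕ, AnalyticAt ℂ
      (fun x => MvPolynomial.aeval (v x) (MvPolynomial.esymm (Fin n) ℂ m)) x₀ := by
    intro m
    induction m using Nat.strong_induction_on with
    | _ m ih =>
      rcases Nat.eq_zero_or_pos m with rfl | hm
      · simp only [MvPolynomial.esymm_zero, map_one]
        exact analyticAt_const
      · have e : (fun x => MvPolynomial.aeval (v x) (MvPolynomial.esymm (Fin n) ℂ m)) =
          fun x => (m : ℂ)⁻¹ * ((-1) ^ (m + 1) *
            ∑ a ∈ Finset.HasAntidiagonal.antidiagonal m with a.1 < m, (-1) ^ a.1 *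
              MvPolynomial.aeval (v x) (MvPolynomial.esymm (Fin n) ℂ a.1) * ∑ i, v x i ^ a.2) := by
          ext x
          have := congrArg (MvPolynomial.aeval (v x)) (MvPolynomial.mul_esymm_eq_sum (Fin n) ℂ m)
          simp only [map_mul, map_natCast, map_pow, map_neg, map_one, map_sum,
            MvPolynomial.psum, MvPolynomial.aeval_X] at this
          rw [← this]
          have : (m : ℂ) ≠ 0 := by exact_mod_cast hm.ne'
          field_simp
        rw [e]
        refine analyticAt_const.mul (analyticAt_const.mul ?_)
        apply Finset.analyticAt_fun_sum
        intro a ha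
        exact (analyticAt_const.mul (ih _ (Finset.mem_filter.1 ha).2)).mul (h _)
  have := key n
  have e : (fun x => MvPolynomial.aeval (v x) (MvPolynomial.esymm (Fin n) ℂ n)) =
      fun x => ∏ i, v x i := by
    ext x
    rw [MvPolynomial.esymm]
    have : Finset.powersetCard n (Finset.univ : Finset (Fin n)) = {Finset.univ} := by
      have := Finset.powersetCard_self (Finset.univ : Finset (Fin n))
      rwa [Finset.card_univ, Fintype.card_fin] at this
    rw [this]
    simp
  rwa [e] at this


lemma eventually_ne_of_sphere {r : ℝ} (hr : 0 < r) {φ : ℂ → ℂ}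
    (hφ : AnalyticOnNhd ℂ φ (closedBall 0 r)) (hs : ∀ w ∈ sphere (0 : ℂ) r, φ w ≠ 0) :
    ∀ w ∈ closedBall (0 : ℂ) r, ∀ᶠ u in 𝓝[≠] w, φ u ≠ 0 := by
  intro w hw
  rcases (hφ w hw).eventually_eq_zero_or_eventually_ne_zero with h | h
  · exfalso
    have hz := hφ.eqOn_zero_of_preconnected_of_eventuallyEq_zero
      (convex_closedBall (0 : ℂ) r).isPreconnected hw h
    have hrs : (r : ℂ) ∈ sphere (0 : ℂ) r := by simp [abs_of_pos hr]
    exact hs _ hrs (hz (sphere_subset_closedBall hrs))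
  · exact h

lemma local_div {φ ψ : ℂ → ℂ} {w : ℂ} (hφ : AnalyticAt ℂ φ w) (hψ : AnalyticAt ℂ ψ w)
    (hne : ∀ᶠ u in 𝓝[≠] w, φ u ≠ 0) (hO : ψ =O[𝓝 w] φ) :
    ∃ q : ℂ → ℂ, AnalyticAt ℂ q w ∧ ∀ᶠ u in 𝓝[≠] w, ψ u / φ u = q u := by
  obtain ⟨C, hC⟩ := hO.bound
  rw [eventually_nhdsWithin_iff] at hne
  obtain ⟨s, hs, hso, hws⟩ := _root_.eventually_nhds_iff.1 (hne.and (hC.and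
    (hφ.eventually_analyticAt.and hψ.eventually_analyticAt)))
  have hsn : s ∈ 𝓝 w := hso.mem_nhds hws
  have hd : DifferentiableOn ℂ (fun u => ψ u / φ u) (s \ {w}) := by
    intro u hu
    obtain ⟨h1, h2, h3, h4⟩ := hs u hu.1
    exact (h4.differentiableAt.fun_div h3.differentiableAt (h1 hu.2)).differentiableWithinAt
  have hb : BddAbove (norm ∘ (fun u => ψ u / φ u) '' (s \ {w})) := by
    refine ⟨C, ?_⟩
    rintro _ ⟨u, hu, rfl⟩
    obtain ⟨h1, h2, -, -⟩ := hs u hu.1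
    simp only [Function.comp_apply, norm_div]
    rw [div_le_iff₀ (norm_pos_iff.2 (h1 hu.2))]
    exact h2
  have := Complex.differentiableOn_update_limUnder_of_bddAbove hsn hd hb
  refine ⟨_, this.analyticAt hsn, ?_⟩
  filter_upwards [self_mem_nhdsWithin] with u hu
  rw [Function.update_of_ne hu]

lemma global_div {K : Set ℂ} {φ ψ : ℂ → ℂ}
    (hφ : AnalyticOnNhd ℂ φ K) (hψ : AnalyticOnNhd ℂ ψ K)
    (hne : ∀ w ∈ K, ∀ᶠ u in 𝓝[≠] w, φ u ≠ 0) (hO : ∀ w ∈ K, ψ =O[𝓝 w] φ) :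
    ∃ Q : ℂ → ℂ, AnalyticOnNhd ℂ Q K ∧ ∀ w ∈ K, ∀ᶠ u in 𝓝 w, ψ u = φ u * Q u := by
  refine ⟨fun w => limUnder (𝓝[≠] w) (fun u => ψ u / φ u), ?_⟩
  have key : ∀ w ∈ K, ∃ q : ℂ → ℂ, AnalyticAt ℂ q w ∧
      (∀ᶠ u in 𝓝 w, q u = limUnder (𝓝[≠] u) (fun u => ψ u / φ u)) ∧
      ∀ᶠ u in 𝓝 w, ψ u = φ u * q u := by
    intro w hw
    obtain ⟨q, hq, hqe⟩ := local_div (hφ w hw) (hψ w hw) (hne w hw) (hO w hw)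
    refine ⟨q, hq, ?_, ?_⟩
    · have h1 : ∀ᶠ u in 𝓝[≠] w, ∀ᶠ v in 𝓝 u, ψ v / φ v = q v := by
        rw [eventually_nhdsWithin_iff] at hqe ⊢
        filter_upwards [hqe.eventually_nhds] with u hu huw
        filter_upwards [hu, isOpen_ne.mem_nhds huw] with v hv hvw using hv hvw
      have h1' := eventually_nhdsWithin_iff.1 h1
      filter_upwards [h1', hq.eventually_analyticAt] with u hu hqu
      symm
      apply Tendsto.limUnder_eq
      have ht : Tendsto q (𝓝[≠] u) (𝓝 (q u)) := hqu.continuousAt.tendsto.mono_left nhdsWithin_le_nhds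
      refine ht.congr' ?_
      by_cases huw : u = w
      · rw [huw]
        filter_upwards [hqe] with v hv using hv.symm
      · filter_upwards [(hu huw).filter_mono nhdsWithin_le_nhds] with v hv using hv.symm
    · have := ContinuousAt.eventuallyEq_nhds_iff_eventuallyEq_nhdsNE (hψ w hw).continuousAt
        ((hφ w hw).continuousAt.mul hq.continuousAt)
      refine this.1 ?_
      filter_upwards [hqe, hne w hw] with u h1 h2
      simp only [Pi.mul_apply]
      rw [← h1]; field_simp
  refine ⟨fun w hw => ?_, fun w hw => ?_⟩
  · obtain ⟨q, hq, h1, h2⟩ := key w hw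
    exact hq.congr h1
  · obtain ⟨q, hq, h1, h2⟩ := key w hw
    filter_upwards [h1, h2] with u hu1 hu2
    rw [hu2, hu1]

lemma cauchy_div {r : ℝ} (hr : 0 < r) {φ ψ : ℂ → ℂ}
    (hφ : AnalyticOnNhd ℂ φ (closedBall 0 r)) (hψ : AnalyticOnNhd ℂ ψ (closedBall 0 r))
    (hs : ∀ w ∈ sphere (0 : ℂ) r, φ w ≠ 0) (hO : ∀ w ∈ closedBall (0 : ℂ) r, ψ =O[𝓝 w] φ)
    {y : ℂ} (hy : y ∈ ball (0 : ℂ) r) :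
    ψ y = φ y * ((2 * Real.pi * Complex.I)⁻¹ * ∮ w in C(0, r), (w - y)⁻¹ * (ψ w / φ w)) := by
  obtain ⟨Q, hQ, hQe⟩ := global_div hφ hψ (eventually_ne_of_sphere hr hφ hs) hO
  have hdc : DiffContOnCl ℂ Q (ball 0 r) :=
    (hQ.differentiableOn.mono closure_ball_subset_closedBall).diffContOnCl
  have := hdc.two_pi_i_inv_smul_circleIntegral_sub_inv_smul hy
  rw [(hQe y (ball_subset_closedBall hy)).self_of_nhds, ← this, smul_eq_mul]
  congr 2
  apply circleIntegral.integral_congr hr.le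
  intro w hw
  have h1 := (hQe w (sphere_subset_closedBall hw)).self_of_nhds
  have h2 := hs w hw
  simp only [smul_eq_mul]
  rw [h1]; field_simp

lemma zeros_finite {r : ℝ} (hr : 0 < r) {φ : ℂ → ℂ}
    (hφ : AnalyticOnNhd ℂ φ (closedBall 0 r)) (hs : ∀ w ∈ sphere (0 : ℂ) r, φ w ≠ 0) :
    {w | w ∈ closedBall (0 : ℂ) r ∧ φ w = 0}.Finite := by
  by_contra hinf
  obtain ⟨w, hw, hacc⟩ := Set.Infinite.exists_accPt_of_subset_isCompact hinf
    (isCompact_closedBall (0 : ℂ) r) (fun _ h => h.1)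
  rw [accPt_iff_frequently] at hacc
  have h1 := eventually_nhdsWithin_iff.1 (eventually_ne_of_sphere hr hφ hs w hw)
  obtain ⟨u, hu1, hu2⟩ := (hacc.and_eventually h1).exists
  exact hu2 hu1.1 hu1.2.2

lemma zeros_multiset {r : ℝ} (hr : 0 < r) (N : ℕ) : ∀ {φ : ℂ → ℂ},
    AnalyticOnNhd ℂ φ (closedBall 0 r) → (∀ w ∈ sphere (0 : ℂ) r, φ w ≠ 0) →
    {w | w ∈ closedBall (0 : ℂ) r ∧ φ w = 0}.ncard = N →
    ∃ T : Multiset ℂ, (∀ w, w ∈ T ↔ w ∈ closedBall (0 : ℂ) r ∧ φ w = 0) ∧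
      ∀ κ : ℂ → ℂ, AnalyticOnNhd ℂ κ (closedBall 0 r) →
        ∮ w in C(0, r), κ w * logDeriv φ w = 2 * Real.pi * Complex.I * (T.map κ).sum := by
  induction N with
  | zero =>
    intro φ hφ hs hN
    rw [Set.ncard_eq_zero (zeros_finite hr hφ hs)] at hN
    refine ⟨0, fun w => ?_, fun κ hκ => ?_⟩
    · constructor
      · intro h; simp at h
      · intro h
        have : w ∈ (∅ : Set ℂ) := hN ▸ h
        exact absurd this (by simp)
    · simp only [Multiset.map_zero, Multiset.sum_zero, mul_zero]
      have hd : DifferentiableOn ℂ (fun w => κ w * logDeriv φ w) (closedBall 0 r) := by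
        intro w hw
        have hne : φ w ≠ 0 := by
          intro h0
          have : w ∈ (∅ : Set ℂ) := hN ▸ ⟨hw, h0⟩
          exact absurd this (by simp)
        have := (hκ w hw).fun_mul ((hφ w hw).deriv.fun_div (hφ w hw) hne)
        exact this.differentiableAt.differentiableWithinAt
      exact (hd.mono closure_ball_subset_closedBall).diffContOnCl.circleIntegral_eq_zero hr.le
  | succ N ih =>
    intro φ hφ hs hN
    have hfin := zeros_finite hr hφ hs
    obtain ⟨t, htb, ht0⟩ : {w | w ∈ closedBall (0 : ℂ) r ∧ φ w = 0}.Nonempty := by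
      rw [← Set.ncard_pos hfin]; omega
    have hnetop : ¬ ∀ᶠ u in 𝓝 t, φ u = 0 := by
      intro h
      obtain ⟨u, hu1, hu2⟩ := ((eventually_ne_of_sphere hr hφ hs t htb).and
        (h.filter_mono nhdsWithin_le_nhds)).exists
      exact hu1 hu2
    obtain ⟨m, g, hg, hg0, hge⟩ := (hφ t htb).exists_eventuallyEq_pow_smul_nonzero_iff.2 hnetop
    have hm : m ≠ 0 := by
      rintro rfl
      have := hge.self_of_nhds
      rw [ht0] at this
      simp at this
      exact hg0 this.symm
    have htball : t ∈ ball (0 : ℂ) r := by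
      by_contra hcon
      apply hs t _ ht0
      rw [mem_ball, not_lt] at hcon
      exact le_antisymm htb hcon
    have hpne : ∀ w, w ≠ t → (w - t) ^ m ≠ 0 := fun w hw => pow_ne_zero _ (sub_ne_zero.2 hw)
    have hpan : AnalyticOnNhd ℂ (fun w => (w - t) ^ m) (closedBall 0 r) := by
      intro w _; fun_prop
    obtain ⟨Q, hQ, hQe⟩ := global_div hpan hφ (by
        intro w hw
        by_cases hwt : w = t
        · subst hwt
          filter_upwards [self_mem_nhdsWithin] with u hu using hpne u hu
        · filter_upwards [nhdsWithin_le_nhds (isOpen_ne.mem_nhds hwt)] with u hu using hpne u hu)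
      (by
        intro w hw
        by_cases hwt : w = t
        · subst hwt
          have h1 : φ =ᶠ[𝓝 w] fun z => (z - w) ^ m * g z := hge
          refine h1.trans_isBigO ?_
          have h2 : g =O[𝓝 w] (fun _ => (1 : ℂ)) := hg.continuousAt.tendsto.isBigO_one ℂ
          simpa using (Asymptotics.isBigO_refl (fun z => (z - w) ^ m) (𝓝 w)).mul h2
        · have h2 : φ =O[𝓝 w] (fun _ => (1 : ℂ)) := (hφ w hw).continuousAt.tendsto.isBigO_one ℂ
          refine h2.trans ?_
          have h3 : ContinuousAt (fun z => ((z - t) ^ m)⁻¹) w :=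
            ContinuousAt.inv₀ (by fun_prop) (hpne w hwt)
          have h4 : (fun z => ((z - t) ^ m)⁻¹) =O[𝓝 w] (fun _ => (1 : ℂ)) := h3.tendsto.isBigO_one ℂ
          have h5 := (Asymptotics.isBigO_refl (fun z => (z - t) ^ m) (𝓝 w)).mul h4
          refine Asymptotics.IsBigO.congr' h5 ?_ (by simp)
          filter_upwards [isOpen_ne.mem_nhds hwt] with u hu
          exact mul_inv_cancel₀ (hpne u hu))
    have hQt : Q t ≠ 0 := by
      have h1 : Q =ᶠ[𝓝[≠] t] g := by
        filter_upwards [(hQe t htb).filter_mono nhdsWithin_le_nhds,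
          hge.filter_mono nhdsWithin_le_nhds, self_mem_nhdsWithin] with u h1 h2 h3
        rw [h1, smul_eq_mul] at h2
        exact mul_left_cancel₀ (hpne u h3) h2
      have h2 := (ContinuousAt.eventuallyEq_nhds_iff_eventuallyEq_nhdsNE
        (hQ t htb).continuousAt hg.continuousAt).1 h1
      rw [h2.self_of_nhds]
      exact hg0
    have hQs : ∀ w ∈ sphere (0 : ℂ) r, Q w ≠ 0 := by
      intro w hw h0
      apply hs w hw
      rw [(hQe w (sphere_subset_closedBall hw)).self_of_nhds, h0, mul_zero]
    have hzs : {w | w ∈ closedBall (0 : ℂ) r ∧ Q w = 0} =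
        {w | w ∈ closedBall (0 : ℂ) r ∧ φ w = 0} \ {t} := by
      ext w
      simp only [Set.mem_ofPred_eq, Set.mem_sdiff, Set.mem_singleton_iff]
      constructor
      · rintro ⟨h1, h2⟩
        refine ⟨⟨h1, ?_⟩, ?_⟩
        · rw [(hQe w h1).self_of_nhds, h2, mul_zero]
        · rintro rfl; exact hQt h2
      · rintro ⟨⟨h1, h2⟩, h3⟩
        refine ⟨h1, ?_⟩
        rw [(hQe w h1).self_of_nhds] at h2
        exact (mul_eq_zero.1 h2).resolve_left (hpne w h3)
    obtain ⟨T, hT, hTi⟩ := ih hQ hQs (by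
      rw [hzs, Set.ncard_sdiff_singleton_of_mem (by exact ⟨htb, ht0⟩), hN]; rfl)
    refine ⟨Multiset.replicate m t + T, fun w => ?_, fun κ hκ => ?_⟩
    · rw [Multiset.mem_add, Multiset.mem_replicate, hT]
      have := congrArg (fun S => w ∈ S) hzs
      simp only [Set.mem_ofPred_eq, Set.mem_sdiff, Set.mem_singleton_iff, eq_iff_iff] at this
      rw [this]
      by_cases hwt : w = t
      · subst hwt; simp only [hm, ne_eq, not_false_eq_true, true_and, true_or, true_iff]
        exact ⟨htb, ht0⟩
      · simp [hwt]
    · have hne' : ∀ w ∈ sphere (0 : ℂ) r, w ≠ t := by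
        rintro w hw rfl
        exact hs w hw ht0
      have e1 : ∮ w in C(0, r), κ w * logDeriv φ w =
          ∮ w in C(0, r), ((m : ℂ) * ((w - t)⁻¹ • κ w) + κ w * logDeriv Q w) := by
        apply circleIntegral.integral_congr hr.le
        intro w hw
        have hwc := sphere_subset_closedBall hw
        have h1 : logDeriv φ w = logDeriv (fun u => (u - t) ^ m * Q u) w := by
          have := hQe w hwc
          simp only [logDeriv_apply]
          rw [EventuallyEq.deriv_eq this, this.self_of_nhds]
        have h2 : logDeriv (fun u => (u - t) ^ m) w = m / (w - t) := by
          rw [logDeriv_fun_pow (by fun_prop)]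
          simp [logDeriv_apply, div_eq_mul_inv]
        simp only [smul_eq_mul]
        rw [h1, logDeriv_mul w (hpne w (hne' w hw)) (hQs w hw) (by fun_prop)
          (hQ w hwc).differentiableAt, h2]
        ring
      have hc1 : ContinuousOn κ (sphere 0 r) := hκ.continuousOn.mono sphere_subset_closedBall
      rw [e1, circleIntegral.integral_add, circleIntegral.integral_const_mul,
        ((hκ.differentiableOn.mono closure_ball_subset_closedBall).diffContOnCl).circleIntegral_sub_inv_smul htball, hTi κ hκ]
      · simp only [Multiset.map_add, Multiset.map_replicate, Multiset.sum_add,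
          Multiset.sum_replicate, nsmul_eq_mul, smul_eq_mul]
        ring
      · apply ContinuousOn.circleIntegrable hr.le
        refine continuousOn_const.mul (ContinuousOn.fun_smul (ContinuousOn.inv₀ (by fun_prop) ?_) hc1)
        intro w hw
        exact sub_ne_zero.2 (hne' w hw)
      · apply ContinuousOn.circleIntegrable hr.le
        refine hc1.mul ?_
        intro w hw
        have hwc := sphere_subset_closedBall hw
        exact ((hQ w hwc).deriv.fun_div (hQ w hwc) (hQs w hw)).continuousAt.continuousWithinAt

lemma multiset_enum {n : ℕ} (T : Multiset ℂ) (h : T.card = n) :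
    ∃ v : Fin n → ℂ, Finset.univ.val.map v = T := by
  subst h
  obtain ⟨l, rfl⟩ : ∃ l : List ℂ, (l : Multiset ℂ) = T := ⟨T.toList, T.coe_toList⟩
  refine ⟨fun i => l.get i, ?_⟩
  have := Fin.univ_val_map (fun i : Fin l.length => l.get i)
  rw [List.ofFn_get] at this
  exact this

lemma core {f a b h : ℂ × ℂ → ℂ} (hf : AnalyticAt ℂ f 0) (ha : AnalyticAt ℂ a 0)
    (hb : AnalyticAt ℂ b 0) (hh : AnalyticAt ℂ h 0)
    (hnz : ¬ ∀ᶠ w in 𝓝 (0 : ℂ), f (0, w) = 0)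
    (hsm : ∀ᶠ z in 𝓝 (0 : ℂ × ℂ), f z = 0 → z ≠ 0 → fderiv ℂ f z ≠ 0)
    (hz : ∀ᶠ z in 𝓝 (0 : ℂ × ℂ), f z = 0 → h z = 0)
    (hab : ∀ᶠ z in 𝓝 (0 : ℂ × ℂ), f z = 0 → z ≠ 0 → ¬ (a z = 0 ∧ b z = 0)) :
    (∃ c : ℂ × ℂ → ℂ, AnalyticAt ℂ c 0 ∧ ∀ᶠ z in 𝓝 (0 : ℂ × ℂ), h z = f z * c z) ∧
    ∃ s : ℂ, ∀ᶠ z in 𝓝 (0 : ℂ × ℂ), f z = 0 → z ≠ 0 → a z + s * b z ≠ 0 := by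
  obtain ⟨R, hR, hRall⟩ := Metric.eventually_nhds_iff_ball.1
    (hf.eventually_analyticAt.and (ha.eventually_analyticAt.and (hb.eventually_analyticAt.and
      (hh.eventually_analyticAt.and (hsm.and (hz.and hab))))))
  have hf0 : AnalyticAt ℂ (fun w => f (0, w)) 0 := AnalyticAt.curry_right (f := f) hf
  have hpunct := hf0.eventually_eq_zero_or_eventually_ne_zero.resolve_left hnz
  obtain ⟨r', hr', hr'all⟩ := Metric.eventually_nhds_iff_ball.1 (eventually_nhdsWithin_iff.1 hpunct)
  set r := min (r' / 2) (R / 2) with hrdef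
  have hr : 0 < r := by positivity
  have hrR : r < R := lt_of_le_of_lt (min_le_right _ _) (by linarith)
  have hrr' : r < r' := lt_of_le_of_lt (min_le_left _ _) (by linarith)
  have hf0ne : ∀ w ∈ closedBall (0 : ℂ) r, w ≠ 0 → f (0, w) ≠ 0 := by
    intro w hw hw0
    exact hr'all w (closedBall_subset_ball hrr' hw) hw0
  have hsph0 : ∀ w ∈ sphere (0 : ℂ) r, w ≠ 0 := by
    rintro w hw rfl
    simp at hw; linarith
  have htube : ∀ᶠ x in 𝓝 (0 : ℂ), ∀ w ∈ sphere (0 : ℂ) r, f (x, w) ≠ 0 := by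
    apply (isCompact_sphere (0 : ℂ) r).eventually_forall_of_forall_eventually
    intro w hw
    have hwm : ((0 : ℂ), w) ∈ ball (0 : ℂ × ℂ) R := by
      simp only [mem_ball_zero_iff, Prod.norm_mk, norm_zero]
      simp at hw
      rw [hw]; simp [hrR, hR]
    exact (hRall _ hwm).1.continuousAt.eventually_ne
      (hf0ne w (sphere_subset_closedBall hw) (hsph0 w hw))
  obtain ⟨ρ', hρ', hρ'all⟩ := Metric.eventually_nhds_iff_ball.1 htube
  set ρ := min (ρ' / 2) (R / 2) with hρdef
  have hρ : 0 < ρ := by positivity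
  have hρR : ρ < R := lt_of_le_of_lt (min_le_right _ _) (by linarith)
  have hρρ' : ρ < ρ' := lt_of_le_of_lt (min_le_left _ _) (by linarith)
  have hsne : ∀ x ∈ closedBall (0 : ℂ) ρ, ∀ w ∈ sphere (0 : ℂ) r, f (x, w) ≠ 0 :=
    fun x hx => hρ'all x (closedBall_subset_ball hρρ' hx)
  have hmem : ∀ x ∈ closedBall (0 : ℂ) ρ, ∀ w ∈ closedBall (0 : ℂ) r,
      (x, w) ∈ ball (0 : ℂ × ℂ) R := by
    intro x hx w hw
    rw [mem_closedBall_zero_iff] at hx hw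
    simp only [mem_ball_zero_iff, Prod.norm_mk]
    exact max_lt (by linarith) (by linarith)
  have hfR : AnalyticOnNhd ℂ f (ball 0 R) := fun z hz => (hRall z hz).1
  clear_value r ρ
  -- parametric integrals
  have hpar : ∀ A : ℂ × ℂ → ℂ, AnalyticOnNhd ℂ A (ball 0 R) →
      AnalyticAt ℂ (fun z : ℂ × ℂ => ∮ w in C(0, r), (w - z.2)⁻¹ * (A (z.1, w) / f (z.1, w))) 0 := by
    intro A hA
    have hAn : ∀ x ∈ closedBall (0 : ℂ) ρ, ∀ w ∈ sphere (0 : ℂ) r,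
        AnalyticAt ℂ (fun z => A z / f z) (x, w) := by
      intro x hx w hw
      have hm := hmem x hx w (sphere_subset_closedBall hw)
      exact (hA _ hm).fun_div (hfR _ hm) (hsne x hx w hw)
    apply cauchy_param_analytic hρ hr (fun x w => A (x, w) / f (x, w))
    · intro q hq
      exact (hAn q.1 hq.1 q.2 hq.2).continuousAt.continuousWithinAt
    · intro w hw x hx
      exact (AnalyticAt.curry_left (f := fun z => A z / f z)
        (hAn x hx w hw)).differentiableAt.differentiableWithinAt
  have hslice : ∀ A : ℂ × ℂ → ℂ, AnalyticOnNhd ℂ A (ball 0 R) → ∀ x ∈ closedBall (0 : ℂ) ρ,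
      AnalyticOnNhd ℂ (fun w => A (x, w)) (closedBall 0 r) := by
    intro A hA x hx w hw
    exact AnalyticAt.curry_right (f := A) (hA _ (hmem x hx w hw))
  have hhR : AnalyticOnNhd ℂ h (ball 0 R) := fun z hz => (hRall z hz).2.2.2.1
  have hnhds : ball (0 : ℂ) ρ ×ˢ ball (0 : ℂ) r ∈ 𝓝 (0 : ℂ × ℂ) :=
    prod_mem_nhds (ball_mem_nhds _ hρ) (ball_mem_nhds _ hr)
  refine ⟨?_, ?_⟩
  · set c : ℂ × ℂ → ℂ := fun z => (2 * Real.pi * Complex.I)⁻¹ *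
      ∮ w in C(0, r), (w - z.2)⁻¹ * (h (z.1, w) / f (z.1, w)) with hc
    have hcan : AnalyticAt ℂ c 0 := analyticAt_const.mul (hpar h hhR)
    refine ⟨c, hcan, ?_⟩
    have hoff : ∀ z ∈ ball (0 : ℂ) ρ ×ˢ ball (0 : ℂ) r, z.1 ≠ 0 → h z = f z * c z := by
      rintro ⟨x, y⟩ ⟨hx, hy⟩ hx0
      simp only at hx hy hx0
      have hx' := ball_subset_closedBall hx
      refine cauchy_div hr (hslice f hfR x hx') (hslice h hhR x hx') (hsne x hx') ?_ hy
      intro w hw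
      have hm := hmem x hx' w hw
      have hbig : h =O[𝓝 (x, w)] f := by
        by_cases hfz : f (x, w) = 0
        · refine isBigO_of_smooth (hfR _ hm) (hhR _ hm) hfz
            ((hRall _ hm).2.2.2.2.1 hfz (by simp [hx0])) ?_
          filter_upwards [isOpen_ball.mem_nhds hm] with z hzm
          exact (hRall z hzm).2.2.2.2.2.1
        · have h2 : h =O[𝓝 (x, w)] (fun _ => (1 : ℂ)) :=
            (hhR _ hm).continuousAt.tendsto.isBigO_one ℂ
          refine h2.trans ?_
          have h3 : ContinuousAt (fun z => (f z)⁻¹) (x, w) := (hfR _ hm).continuousAt.inv₀ hfz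
          have h4 : (fun z => (f z)⁻¹) =O[𝓝 (x, w)] (fun _ => (1 : ℂ)) := h3.tendsto.isBigO_one ℂ
          have h5 := (Asymptotics.isBigO_refl f (𝓝 (x, w))).mul h4
          refine Asymptotics.IsBigO.congr' h5 ?_ (by simp)
          filter_upwards [(hfR _ hm).continuousAt.eventually_ne hfz] with u hu
          exact mul_inv_cancel₀ hu
      have ht : Tendsto (fun u : ℂ => (x, u)) (𝓝 w) (𝓝 (x, w)) := by
        have : Continuous (fun u : ℂ => (x, u)) := by fun_prop
        exact this.tendsto w
      exact hbig.comp_tendsto ht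
    filter_upwards [hnhds, hcan.eventually_analyticAt] with z hz hcz
    by_cases hz1 : z.1 = 0
    · -- continuity
      have hzR : z ∈ ball (0 : ℂ × ℂ) R :=
        hmem z.1 (ball_subset_closedBall hz.1) z.2 (ball_subset_closedBall hz.2)
      have hcurve : Tendsto (fun x : ℂ => (x, z.2)) (𝓝[≠] 0) (𝓝 z) := by
        have h1 : Continuous (fun x : ℂ => (x, z.2)) := by fun_prop
        have h2 := (h1.tendsto 0).mono_left (nhdsWithin_le_nhds (s := {0}ᶜ))
        rwa [show ((0 : ℂ), z.2) = z from by rw [← hz1]] at h2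
      have t1 := ((hhR z hzR).continuousAt.tendsto).comp hcurve
      have t2 := (((hfR z hzR).continuousAt.mul hcz.continuousAt).tendsto).comp hcurve
      refine tendsto_nhds_unique t1 (t2.congr' ?_)
      filter_upwards [self_mem_nhdsWithin, nhdsWithin_le_nhds (ball_mem_nhds (0 : ℂ) hρ)] with x hx0 hxρ
      exact (hoff (x, z.2) ⟨hxρ, hz.2⟩ hx0).symm
    · exact hoff z hz hz1
  · have hT : ∀ x : ℂ, ∃ T : Multiset ℂ, x ∈ closedBall (0 : ℂ) ρ →
        (∀ w, w ∈ T ↔ w ∈ closedBall (0 : ℂ) r ∧ f (x, w) = 0) ∧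
        ∀ κ : ℂ → ℂ, AnalyticOnNhd ℂ κ (closedBall 0 r) →
          ∮ w in C(0, r), κ w * logDeriv (fun w => f (x, w)) w =
            2 * Real.pi * Complex.I * (T.map κ).sum := by
      intro x
      by_cases hx : x ∈ closedBall (0 : ℂ) ρ
      · obtain ⟨T, hT⟩ := zeros_multiset hr _ (hslice f hfR x hx) (hsne x hx) rfl
        exact ⟨T, fun _ => hT⟩
      · exact ⟨0, fun h => absurd h hx⟩
    choose T hT using hT
    have h2pi : (2 * Real.pi * Complex.I : ℂ) ≠ 0 := Complex.two_pi_I_ne_zero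
    have hS : ∀ κ : ℂ × ℂ → ℂ, AnalyticOnNhd ℂ κ (ball 0 R) →
        AnalyticAt ℂ (fun x => ((T x).map (fun w => κ (x, w))).sum) 0 := by
      intro κ hκ
      have hA : AnalyticOnNhd ℂ (fun z : ℂ × ℂ => z.2 * (κ z * fderiv ℂ f z (0, 1))) (ball 0 R) := by
        intro z hz
        have h1 : AnalyticAt ℂ (fun z => fderiv ℂ f z (0, 1)) z :=
          (ContinuousLinearMap.analyticAt (ContinuousLinearMap.apply ℂ ℂ ((0 : ℂ), (1 : ℂ))) _).fun_comp
            (hfR z hz).fderiv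
        exact analyticAt_snd.fun_mul ((hκ z hz).fun_mul h1)
      have h1 := hpar _ hA
      have h2 : AnalyticAt ℂ (fun x : ℂ => (2 * Real.pi * Complex.I : ℂ)⁻¹ *
          ∮ w in C(0, r), (w - 0)⁻¹ * (w * (κ (x, w) * fderiv ℂ f (x, w) (0, 1)) / f (x, w))) 0 :=
        analyticAt_const.mul (AnalyticAt.curry_left (f := fun z : ℂ × ℂ => ∮ w in C(0, r), (w - z.2)⁻¹ *
          (w * (κ (z.1, w) * fderiv ℂ f (z.1, w) (0, 1)) / f (z.1, w))) (p := (0, 0)) h1)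
      refine h2.congr ?_
      filter_upwards [ball_mem_nhds (0 : ℂ) hρ] with x hx
      have hx' := ball_subset_closedBall hx
      rw [inv_mul_eq_iff_eq_mul₀ h2pi, ← (hT x hx').2 _ (hslice κ hκ x hx')]
      apply circleIntegral.integral_congr hr.le
      intro w hw
      have hm := hmem x hx' w (sphere_subset_closedBall hw)
      have hd : HasDerivAt (fun u => f (x, u)) (fderiv ℂ f (x, w) (0, 1)) w := by
        have h1 := (hfR _ hm).differentiableAt.hasFDerivAt
        have h2 : HasDerivAt (fun u : ℂ => (x, u)) ((0 : ℂ), (1 : ℂ)) w :=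
          (hasDerivAt_const w x).prodMk (hasDerivAt_id w)
        exact h1.comp_hasDerivAt w h2
      simp only [logDeriv_apply, hd.deriv]
      have := hsph0 w hw
      have := hsne x hx' w hw
      field_simp
      ring_nf
    -- constant number of roots
    have hcard : ∀ᶠ x in 𝓝 (0 : ℂ), (T x).card = (T 0).card := by
      have h1 := (hS (fun _ => 1) (fun _ _ => analyticAt_const)).continuousAt
      simp only [Multiset.map_const', Multiset.sum_replicate, nsmul_eq_mul, mul_one] at h1
      have h2 := Metric.continuousAt_iff'.1 h1 1 one_pos
      filter_upwards [h2] with x hx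
      rw [Complex.dist_eq] at hx
      have h3 : ‖((((T x).card : ℤ) - ((T 0).card : ℤ) : ℤ) : ℂ)‖ < 1 := by
        push_cast
        exact hx
      rw [Complex.norm_intCast] at h3
      have h4 : |((T x).card : ℤ) - ((T 0).card : ℤ)| < 1 := by exact_mod_cast h3
      rw [Int.abs_lt_one_iff] at h4
      omega
    set n := (T 0).card with hn
    have hv : ∀ x, ∃ v : Fin n → ℂ, (T x).card = n → Finset.univ.val.map v = T x := by
      intro x
      by_cases hx : (T x).card = n
      · obtain ⟨v, hv⟩ := multiset_enum (T x) hx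
        exact ⟨v, fun _ => hv⟩
      · exact ⟨0, fun h => absurd h hx⟩
    choose v hv using hv
    have hN : ∀ s : ℂ, AnalyticAt ℂ (fun x => ∏ i, (a (x, v x i) + s * b (x, v x i))) 0 := by
      intro s
      apply prod_analytic
      intro j
      refine (hS (fun z => (a z + s * b z) ^ j) ?_).congr ?_
      · intro z hz
        exact ((hRall z hz).2.1.fun_add (analyticAt_const.fun_mul (hRall z hz).2.2.1)).fun_pow j
      · filter_upwards [hcard] with x hx
        rw [← hv x hx, Multiset.map_map]
        rfl
    have hex : ∃ s : ℂ, ∀ᶠ x in 𝓝[≠] (0 : ℂ), ∏ i, (a (x, v x i) + s * b (x, v x i)) ≠ 0 := by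
      by_contra! hcon
      have h0 : ∀ s : ℂ, ∀ᶠ x in 𝓝 (0 : ℂ), ∏ i, (a (x, v x i) + s * b (x, v x i)) = 0 := by
        intro s
        refine (hN s).eventually_eq_zero_or_eventually_ne_zero.resolve_right ?_
        intro h
        obtain ⟨x, hx1, hx2⟩ := ((hcon s).and_eventually h).exists
        exact hx2 hx1
      have h1 : ∀ᶠ x in 𝓝 (0 : ℂ), ∀ s : Fin (n + 1),
          ∏ i, (a (x, v x i) + ((s : ℕ) : ℂ) * b (x, v x i)) = 0 :=
        eventually_all.2 fun s => h0 _
      obtain ⟨x, ⟨hx1, hxc, hxρ⟩, hx0⟩ := (((h1.and (hcard.and (ball_mem_nhds (0 : ℂ) hρ))).filter_mono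
        nhdsWithin_le_nhds).and (self_mem_nhdsWithin (s := {(0 : ℂ)}ᶜ))).exists
      have h2 : ∀ s : Fin (n + 1), ∃ i : Fin n, a (x, v x i) + ((s : ℕ) : ℂ) * b (x, v x i) = 0 := by
        intro s
        obtain ⟨i, -, hi⟩ := Finset.prod_eq_zero_iff.1 (hx1 s)
        exact ⟨i, hi⟩
      choose i hi using h2
      obtain ⟨s, t, hst, hit⟩ := Fintype.exists_ne_map_eq_of_card_lt i (by simp)
      have e1 := hi s
      have e2 := hi t
      rw [hit] at e1
      have hne : (((s : ℕ) : ℂ) - ((t : ℕ) : ℂ)) ≠ 0 := by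
        rw [sub_ne_zero]
        intro h
        exact hst (Fin.ext (by exact_mod_cast h))
      have hb0 : b (x, v x (i t)) = 0 := by
        have : (((s : ℕ) : ℂ) - ((t : ℕ) : ℂ)) * b (x, v x (i t)) = 0 := by linear_combination e1 - e2
        exact (mul_eq_zero.1 this).resolve_left hne
      have ha0 : a (x, v x (i t)) = 0 := by rw [hb0] at e2; simpa using e2
      have hxρ' := ball_subset_closedBall hxρ
      have hmT : v x (i t) ∈ T x := by
        rw [← hv x hxc]
        exact Multiset.mem_map_of_mem _ (by simp)
      obtain ⟨hw1, hw2⟩ := ((hT x hxρ').1 _).1 hmT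
      exact (hRall _ (hmem x hxρ' _ hw1)).2.2.2.2.2.2 hw2
        (by intro h; exact hx0 (congrArg Prod.fst h)) ⟨ha0, hb0⟩
    obtain ⟨s, hs⟩ := hex
    refine ⟨s, ?_⟩
    have hfst : Tendsto (Prod.fst : ℂ × ℂ → ℂ) (𝓝 0) (𝓝 0) := continuous_fst.tendsto _
    filter_upwards [hnhds, hfst.eventually (eventually_nhdsWithin_iff.1 hs), hfst.eventually hcard]
      with z hz hzs hzc hfz hz0 hk
    obtain ⟨x, y⟩ := z
    simp only at hzs hzc
    have hx' := ball_subset_closedBall hz.1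
    have hy' := ball_subset_closedBall hz.2
    by_cases hx0 : x = 0
    · subst hx0
      refine hf0ne y hy' ?_ hfz
      rintro rfl
      exact hz0 rfl
    · have hyT : y ∈ T x := ((hT x hx').1 y).2 ⟨hy', hfz⟩
      rw [← hv x hzc, Multiset.mem_map] at hyT
      obtain ⟨i, -, hi⟩ := hyT
      apply hzs hx0
      apply Finset.prod_eq_zero (Finset.mem_univ i)
      rw [hi]; exact hk

lemma exists_direction {f : ℂ × ℂ → ℂ} {p : ℂ × ℂ} (hf : AnalyticAt ℂ f p)
    (h : ¬ ∀ᶠ z in 𝓝 p, f z = 0) :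
    ∃ v : ℂ × ℂ, ¬ ∀ᶠ t in 𝓝 (0 : ℂ), f (p + t • v) = 0 := by
  by_contra! hcon
  apply h
  obtain ⟨ε, hε, hall⟩ := Metric.eventually_nhds_iff_ball.1 hf.eventually_analyticAt
  filter_upwards [ball_mem_nhds p hε] with z hz
  have han : AnalyticOnNhd ℂ (fun t : ℂ => f (p + t • (z - p))) (closedBall 0 1) := by
    intro t ht
    have hm : p + t • (z - p) ∈ ball p ε := by
      rw [mem_ball_iff_norm] at hz ⊢
      rw [add_sub_cancel_left, norm_smul]
      rw [mem_closedBall_zero_iff] at ht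
      nlinarith [norm_nonneg (z - p)]
    refine (hall _ hm).fun_comp (f := fun t : ℂ => p + t • (z - p)) ?_
    exact analyticAt_const.fun_add (analyticAt_id.fun_smul analyticAt_const)
  have := han.eqOn_zero_of_preconnected_of_eventuallyEq_zero
    (convex_closedBall (0 : ℂ) 1).isPreconnected (mem_closedBall_self zero_le_one) (hcon (z - p))
  have h1 := this (show (1 : ℂ) ∈ closedBall (0 : ℂ) 1 by simp)
  simpa using h1

lemma core' {f a b h : ℂ × ℂ → ℂ} {p : ℂ × ℂ} (hf : AnalyticAt ℂ f p) (ha : AnalyticAt ℂ a p)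
    (hb : AnalyticAt ℂ b p) (hh : AnalyticAt ℂ h p) (hfp : f p = 0)
    (hnz : ¬ ∀ᶠ z in 𝓝 p, f z = 0)
    (hsm : ∀ᶠ z in 𝓝 p, f z = 0 → z ≠ p → fderiv ℂ f z ≠ 0)
    (hz : ∀ᶠ z in 𝓝 p, f z = 0 → h z = 0)
    (hab : ∀ᶠ z in 𝓝 p, f z = 0 → z ≠ p → ¬ (a z = 0 ∧ b z = 0)) :
    (∃ c : ℂ × ℂ → ℂ, AnalyticAt ℂ c p ∧ ∀ᶠ z in 𝓝 p, h z = f z * c z) ∧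
    ∃ s : ℂ, ∀ᶠ z in 𝓝 p, f z = 0 → z ≠ p → a z + s * b z ≠ 0 := by
  obtain ⟨v, hv⟩ := exists_direction hf hnz
  have hv0 : v ≠ 0 := by
    rintro rfl
    exact hv (by simp [hfp])
  obtain ⟨A, hA⟩ := SeparatingDual.exists_continuousLinearEquiv_apply_eq (R := ℂ)
    (x := ((0 : ℂ), (1 : ℂ))) (y := v) (by simp) hv0
  set M : ℂ × ℂ → ℂ × ℂ := fun z => p + A z with hM
  set M' : ℂ × ℂ → ℂ × ℂ := fun z => A.symm (z - p) with hM'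
  have hMM' : ∀ z, M (M' z) = z := by intro z; simp [hM, hM']
  have hM0 : M 0 = p := by simp [hM]
  have hM'0 : M' p = 0 := by simp [hM']
  have hMan : ∀ z, AnalyticAt ℂ M z := fun z =>
    analyticAt_const.fun_add ((A : ℂ × ℂ →L[ℂ] ℂ × ℂ).analyticAt z)
  have hM'an : ∀ z, AnalyticAt ℂ M' z := fun z =>
    ((A.symm : ℂ × ℂ →L[ℂ] ℂ × ℂ).analyticAt _).fun_comp (analyticAt_id.fun_sub analyticAt_const)
  have hMt : Tendsto M (𝓝 0) (𝓝 p) := by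
    have := (hMan 0).continuousAt.tendsto
    rwa [hM0] at this
  have hM't : Tendsto M' (𝓝 p) (𝓝 0) := by
    have := (hM'an p).continuousAt.tendsto
    rwa [hM'0] at this
  have hMne : ∀ z, z ≠ 0 → M z ≠ p := by
    intro z hz h
    apply hz
    simpa [hM] using h
  have hM'ne : ∀ z, z ≠ p → M' z ≠ 0 := by
    intro z hz h
    apply hz
    rw [← hMM' z, h, hM0]
  have hcomp : ∀ {g : ℂ × ℂ → ℂ}, AnalyticAt ℂ g p → AnalyticAt ℂ (fun z => g (M z)) 0 := by
    intro g hg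
    exact AnalyticAt.fun_comp (by rwa [hM0]) (hMan 0)
  obtain ⟨⟨c, hc, hce⟩, s, hs⟩ := core (hcomp hf) (hcomp ha) (hcomp hb) (hcomp hh)
    (by
      intro hcon
      apply hv
      filter_upwards [hcon] with t ht
      have : A ((0 : ℂ), t) = t • v := by
        rw [← hA, ← map_smul]; simp
      simpa [hM, this] using ht)
    (by
      filter_upwards [hMt.eventually hsm, hMt.eventually hf.eventually_analyticAt] with z h1 h2 h3 h4 h5
      apply h1 h3 (hMne z h4)
      have hMd : HasFDerivAt M (A : ℂ × ℂ →L[ℂ] ℂ × ℂ) z :=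
        (A : ℂ × ℂ →L[ℂ] ℂ × ℂ).hasFDerivAt.const_add p
      have h6 := (h2.differentiableAt.hasFDerivAt.comp z hMd).fderiv
      have h7 : fderiv ℂ (f ∘ M) z = 0 := h5
      rw [h7] at h6
      refine ContinuousLinearMap.ext fun u => ?_
      have h8 := congrArg (fun L => L (A.symm u)) h6
      simpa using h8.symm)
    (hMt.eventually hz)
    (by
      filter_upwards [hMt.eventually hab] with z h1 h2 h3
      exact h1 h2 (hMne z h3))
  refine ⟨⟨fun z => c (M' z), ?_, ?_⟩, s, ?_⟩
  · exact AnalyticAt.fun_comp (by rwa [hM'0]) (hM'an p)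
  · filter_upwards [hM't.eventually hce] with z hz
    rwa [hMM'] at hz
  · filter_upwards [hM't.eventually hs] with z hz h1 h2
    rw [hMM'] at hz
    exact hz h1 (hM'ne z h2)

end Suwa

/-- Suwa-type decomposition underlying the Camacho–Sad index: let `F` be a holomorphic
foliation near `p ∈ ℂ²` defined by the 1-form `ω = a dx + b dy` with zero set of
codimension 2 (zeros only at `p`), and let `C = {f = 0}` be an invariant analytic curve
through `p` defined by a reduced holomorphic `f` (smooth away from `p`). Then near `p`
there are holomorphic functions `g`, `k` and a holomorphic 1-form `η = c dx + d dy` with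
`g ω = k df + f η` and `k` nonvanishing on `C ∖ {p}` (in particular `k` is not identically
zero on `C`). -/
theorem suwa_decomposition (p : ℂ × ℂ) (f a b fx fy : ℂ × ℂ → ℂ)
    (U : Set (ℂ × ℂ)) (hU : IsOpen U) (hpU : p ∈ U)
    (hf : AnalyticOnNhd ℂ f U)
    (ha : AnalyticOnNhd ℂ a U) (hb : AnalyticOnNhd ℂ b U)
    (hfx : ∀ z ∈ U, HasDerivAt (fun t => f (t, z.2)) (fx z) z.1)
    (hfy : ∀ z ∈ U, HasDerivAt (fun t => f (z.1, t)) (fy z) z.2)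
    (hfp : f p = 0)
    -- `f` is reduced: `C` is smooth away from `p`
    (hred : ∀ z ∈ U, f z = 0 → z ≠ p → ¬(fx z = 0 ∧ fy z = 0))
    -- `ω` has singular set of codimension 2
    (hsat : ∀ z ∈ U, z ≠ p → ¬(a z = 0 ∧ b z = 0))
    -- `C` is invariant: `ω ∧ df = 0` on `C`
    (hinv : ∀ z ∈ U, f z = 0 → a z * fy z - b z * fx z = 0) :
    ∃ V ⊆ U, IsOpen V ∧ p ∈ V ∧
      ∃ g k c d : ℂ × ℂ → ℂ,
        AnalyticOnNhd ℂ g V ∧ AnalyticOnNhd ℂ k V ∧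
        AnalyticOnNhd ℂ c V ∧ AnalyticOnNhd ℂ d V ∧
        (∀ z ∈ V, g z * a z = k z * fx z + f z * c z ∧
          g z * b z = k z * fy z + f z * d z) ∧
        (∀ z ∈ V, f z = 0 → z ≠ p → k z ≠ 0) := by
  have hfd : ∀ z ∈ U, HasFDerivAt f (fderiv ℂ f z) z := fun z hz =>
    (hf z hz).differentiableAt.hasFDerivAt
  have ex : ∀ z ∈ U, fx z = fderiv ℂ f z (1, 0) := by
    intro z hz
    have h2 : HasDerivAt (fun t : ℂ => (t, z.2)) ((1 : ℂ), (0 : ℂ)) z.1 :=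
      (hasDerivAt_id z.1).prodMk (hasDerivAt_const z.1 z.2)
    exact (hfx z hz).unique ((hfd z hz).comp_hasDerivAt z.1 h2)
  have ey : ∀ z ∈ U, fy z = fderiv ℂ f z (0, 1) := by
    intro z hz
    have h2 : HasDerivAt (fun t : ℂ => (z.1, t)) ((0 : ℂ), (1 : ℂ)) z.2 :=
      (hasDerivAt_const z.2 z.1).prodMk (hasDerivAt_id z.2)
    exact (hfy z hz).unique ((hfd z hz).comp_hasDerivAt z.2 h2)
  have hdan : ∀ e : ℂ × ℂ, ∀ z ∈ U, AnalyticAt ℂ (fun z => fderiv ℂ f z e) z := fun e z hz =>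
    (ContinuousLinearMap.analyticAt (ContinuousLinearMap.apply ℂ ℂ e) _).fun_comp (hf z hz).fderiv
  have hfxa : AnalyticOnNhd ℂ fx U := fun z hz => (hdan (1, 0) z hz).congr
    (by filter_upwards [hU.mem_nhds hz] with u hu using (ex u hu).symm)
  have hfya : AnalyticOnNhd ℂ fy U := fun z hz => (hdan (0, 1) z hz).congr
    (by filter_upwards [hU.mem_nhds hz] with u hu using (ey u hu).symm)
  have hUn : ∀ᶠ z in nhds p, z ∈ U := hU.mem_nhds hpU
  have hsm : ∀ z ∈ U, f z = 0 → z ≠ p → fderiv ℂ f z ≠ 0 := by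
    intro z hz h0 hne hd
    apply hred z hz h0 hne
    rw [ex z hz, ey z hz, hd]
    simp
  obtain ⟨⟨c, hc, hce⟩, s, hs⟩ := Suwa.core' (h := fun z => a z * fy z - b z * fx z)
    (hf p hpU) (ha p hpU) (hb p hpU)
    (((ha p hpU).fun_mul (hfya p hpU)).fun_sub ((hb p hpU).fun_mul (hfxa p hpU))) hfp
    (by
      intro hcon
      have h1 : ∀ᶠ z in nhdsWithin p {p}ᶜ, z ∈ U ∧ ∀ᶠ u in nhds z, f u = 0 :=
        (hUn.and hcon.eventually_nhds).filter_mono nhdsWithin_le_nhds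
      obtain ⟨z, ⟨hzU, hz0⟩, hzp⟩ := (h1.and self_mem_nhdsWithin).exists
      apply hsm z hzU hz0.self_of_nhds hzp
      have h2 : f =ᶠ[nhds z] fun _ => 0 := hz0
      rw [h2.fderiv_eq]
      simp)
    (hUn.mono hsm) (hUn.mono hinv) (hUn.mono fun z hz _ hne => hsat z hz hne)
  obtain ⟨V, hV, hVo, hpV⟩ := eventually_nhds_iff.1
    (hUn.and (hce.and (hs.and hc.eventually_analyticAt)))
  refine ⟨V, fun z hz => (hV z hz).1, hVo, hpV, fun z => fx z + s * fy z, fun z => a z + s * b z,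
    fun z => s * c z, fun z => -c z, ?_, ?_, ?_, ?_, ?_, ?_⟩
  · intro z hz
    have hzU := (hV z hz).1
    exact (hfxa z hzU).fun_add (analyticAt_const.fun_mul (hfya z hzU))
  · intro z hz
    have hzU := (hV z hz).1
    exact (ha z hzU).fun_add (analyticAt_const.fun_mul (hb z hzU))
  · intro z hz
    exact analyticAt_const.fun_mul (hV z hz).2.2.2
  · intro z hz
    exact (hV z hz).2.2.2.fun_neg
  · intro z hz
    have h1 := (hV z hz).2.1
    constructor
    · linear_combination s * h1
    · linear_combination -h1
  · intro z hz
    exact (hV z hz).2.2.1
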